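/- Fix an integer r ≥ 2, rationals q_1,…,q_r ∈ (0,1) with q_1+⋯+q_r = 1, a rational α with 0 < α < 1, a real A > 0 and a real ε with 0 < ε < 1/6. Then there exist C > 0 and N₀ ∈ ℕ such that for every N ≥ N₀ and M ∈ ℕ with α·M = N, every K : Fin r → ℕ with K_i = q_i·M for every i, and every n : Fin r → ℕ with ∑_i n_i = N, n_i ≤ K_i for every i, and |n_i − N·q_i| ≤ A·N^{2/3−ε} for every i, one has |P^F(n|K) − G| ≤ C·N^{−3ε}·G, where G = exp(−N·∑_i (n_i/N − q_i)²/(2(1−α) q_i)) / ((2π(1−α)N)^{(r−1)/2} · ∏_i √q_i). -/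

import Mathlib

open Finset

/-- The fermionic counting probability
`P^F(n|K) = (N!/∏ᵢ nᵢ!) ⬝ ((M-N)!/M!) ⬝ ∏ᵢ Kᵢ!/(Kᵢ-nᵢ)!`
with `M = ∑ᵢ Kᵢ` and `N = ∑ᵢ nᵢ`, assuming `nᵢ ≤ Kᵢ`. -/
noncomputable def PF {r : ℕ} (M : ℕ) (n K : Fin r → ℕ) : ℝ :=
  ((∑ i, n i).factorial : ℝ) / (∏ i, ((n i).factorial : ℝ)) *
    (((M - (∑ i, n i)).factorial : ℝ) / (M.factorial : ℝ)) *
    ∏ i, ((K i).factorial : ℝ) / ((K i - n i).factorial : ℝ)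

/-- The asymptotic Gaussian for the fermionic case at particle density `α = N/M`. -/
noncomputable def GaussF {r : ℕ} (N : ℕ) (n : Fin r → ℕ) (q : Fin r → ℚ) (α : ℚ) : ℝ :=
  Real.exp (-(N : ℝ) *
      ∑ i, ((n i : ℝ) / (N : ℝ) - (q i : ℝ)) ^ 2 / (2 * (1 - (α : ℝ)) * (q i : ℝ))) /
    ((2 * Real.pi * (1 - (α : ℝ)) * N) ^ (((r : ℝ) - 1) / 2) * ∏ i, Real.sqrt (q i : ℝ))

/-!
For any success probability `p`, the fermionic counting probability is the law of independent
binomial variables with parameters `Kᵢ` and `p`, conditioned on their sum. At `p = α` the counts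
`nᵢ` and `N` lie near the means `α Kᵢ = qᵢ N` and `α M = N`, so the classical local limit theorem
applies to each binomial mass, and the quotient of the resulting normal densities is exactly the
Gaussian. At the deviation scale `d = O(N ^ (2/3 - ε))` and variance `v` of order `N`, Stirling's
formula has a relative error `O(d / v + d ^ 3 / v ^ 2)`, whose cubic term is `O(N ^ (-3ε))`; the
linear one is `O(N ^ (-1/3 - ε))`, which is not larger when `ε ≤ 1/6`.
-/

open Real Filter Topology ProbabilityTheory
open scoped Nat

section Stirling

/-- Stirling's approximation to `log n!`, as a function of a real variable. -/
noncomputable def stirlingLog (x : ℝ) : ℝ := x * log x - x + log (2 * π * x) / 2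

lemma log_stirlingSeq_succ_le (n : ℕ) :
    log (Stirling.stirlingSeq (n + 1)) ≤ log √π + 1 / (12 * ((n : ℝ) + 1)) := by
  have hmono : Monotone fun n : ℕ ↦
      log (Stirling.stirlingSeq (n + 1)) - 1 / (12 * ((n : ℝ) + 1)) := by
    refine monotone_nat_of_le_succ fun k ↦ ?_
    have hstep := Stirling.log_stirlingSeq_sdiff_le (k + 1)
    have htelescope : 1 / (12 * ((k : ℝ) + 1) * ((k : ℝ) + 1 + 1)) =
        1 / (12 * ((k : ℝ) + 1)) - 1 / (12 * ((k : ℝ) + 1 + 1)) := by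
      field_simp
      ring
    push_cast at hstep ⊢
    linarith
  have hlim : Tendsto (fun n : ℕ ↦ log (Stirling.stirlingSeq (n + 1)) - 1 / (12 * ((n : ℝ) + 1)))
      atTop (𝓝 (log √π - 1 / 12 * 0)) := by
    refine Tendsto.sub ?_ ?_
    · exact ((tendsto_add_atTop_iff_nat 1).2 Stirling.tendsto_stirlingSeq_sqrt_pi).log
        (by positivity)
    · simpa only [one_div_mul_one_div] using
        (tendsto_one_div_add_atTop_nhds_zero_nat (𝕜 := ℝ)).const_mul (1 / (12 : ℝ))
  linarith [hmono.ge_of_tendsto hlim n]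

lemma abs_log_factorial_sub_stirlingLog_le {n : ℕ} (hn : n ≠ 0) :
    |log (n ! : ℝ) - stirlingLog n| ≤ 1 / (12 * (n : ℝ)) := by
  have hn0 : (n : ℝ) ≠ 0 := Nat.cast_ne_zero.2 hn
  have hlower := Stirling.le_log_factorial_stirling hn
  have hupper : log (Stirling.stirlingSeq n) ≤ log √π + 1 / (12 * (n : ℝ)) := by
    obtain ⟨k, rfl⟩ := Nat.exists_eq_succ_of_ne_zero hn
    exact_mod_cast log_stirlingSeq_succ_le k
  rw [Stirling.log_stirlingSeq_formula, log_mul two_ne_zero hn0, log_div hn0 (exp_ne_zero 1),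
    log_exp, log_sqrt pi_pos.le] at hupper
  rw [log_mul two_ne_zero pi_ne_zero] at hlower
  rw [stirlingLog, log_mul (by positivity) hn0, log_mul two_ne_zero pi_ne_zero, abs_le]
  constructor <;> linarith [show 0 ≤ 1 / (12 * (n : ℝ)) by positivity]

lemma abs_log_one_add_le {t : ℝ} (ht : |t| ≤ 1 / 2) : |log (1 + t)| ≤ 2 * |t| := by
  have h := abs_log_sub_add_sum_range_le (x := -t) (by rw [abs_neg]; linarith) 0
  rw [range_zero, sum_empty, zero_add, sub_neg_eq_add, abs_neg, zero_add, pow_one] at h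
  refine h.trans ((div_le_iff₀ (by linarith)).2 ?_)
  nlinarith [abs_nonneg t]

lemma abs_log_one_add_sub_le {t : ℝ} (ht : |t| ≤ 1 / 2) :
    |log (1 + t) - (t - t ^ 2 / 2)| ≤ 2 * |t| ^ 3 := by
  have h := abs_log_sub_add_sum_range_le (x := -t) (by rw [abs_neg]; linarith) 2
  norm_num [sum_range_succ] at h
  calc |log (1 + t) - (t - t ^ 2 / 2)| = |-t + t ^ 2 / 2 + log (1 + t)| := by ring_nf
    _ ≤ |t| ^ 3 / (1 - |t|) := h
    _ ≤ 2 * |t| ^ 3 := by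
      rw [div_le_iff₀ (by linarith)]
      nlinarith [pow_nonneg (abs_nonneg t) 3]

lemma abs_one_add_mul_log_one_add_sub_le {t : ℝ} (ht : |t| ≤ 1 / 2) :
    |(1 + t) * log (1 + t) - (t + t ^ 2 / 2)| ≤ 4 * |t| ^ 3 := by
  obtain ⟨htl, htu⟩ := abs_le.1 ht
  have hmul : |(1 + t) * (log (1 + t) - (t - t ^ 2 / 2))| ≤ 3 / 2 * (2 * |t| ^ 3) := by
    rw [abs_mul, abs_of_pos (by linarith : 0 < 1 + t)]
    exact mul_le_mul (by linarith) (abs_log_one_add_sub_le ht) (abs_nonneg _) (by norm_num)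
  calc |(1 + t) * log (1 + t) - (t + t ^ 2 / 2)|
      = |(1 + t) * (log (1 + t) - (t - t ^ 2 / 2)) - t ^ 3 / 2| := by ring_nf
    _ ≤ |(1 + t) * (log (1 + t) - (t - t ^ 2 / 2))| + |t ^ 3 / 2| := abs_sub _ _
    _ ≤ 3 / 2 * (2 * |t| ^ 3) + |t| ^ 3 / 2 := by
      rw [abs_div, abs_pow, abs_two]
      gcongr
    _ ≤ 4 * |t| ^ 3 := by linarith [pow_nonneg (abs_nonneg t) 3]

lemma stirlingLog_mul_one_add {a t : ℝ} (ha : 0 < a) (ht : 0 < 1 + t) :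
    stirlingLog (a * (1 + t)) =
      stirlingLog a + a * t * log a + a * ((1 + t) * log (1 + t) - t) + log (1 + t) / 2 := by
  rw [stirlingLog, stirlingLog, ← mul_assoc, log_mul ha.ne' ht.ne',
    log_mul (by positivity) ht.ne']
  ring

/-- The derivative of `stirlingLog` is `log x + 1 / (2 * x)`; its second summand is left to the
error, as `|d| / a`. -/
lemma abs_stirlingLog_add_sub_le {a d : ℝ} (ha : 0 < a) (hd : |d| ≤ a / 2) :
    |stirlingLog (a + d) - (stirlingLog a + d * log a + d ^ 2 / (2 * a))| ≤
      |d| / a + 4 * |d| ^ 3 / a ^ 2 := by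
  obtain ⟨t, rfl⟩ : ∃ t, d = a * t := ⟨d / a, by field_simp⟩
  rw [abs_mul, abs_of_pos ha] at hd ⊢
  have ht : |t| ≤ 1 / 2 := le_of_mul_le_mul_left (by linarith) ha
  have hexpand : stirlingLog (a + a * t) -
      (stirlingLog a + a * t * log a + (a * t) ^ 2 / (2 * a)) =
        log (1 + t) / 2 + a * ((1 + t) * log (1 + t) - (t + t ^ 2 / 2)) := by
    rw [← mul_one_add, stirlingLog_mul_one_add ha (by linarith [neg_le_of_abs_le ht])]
    field_simp
    ring
  calc _ = |log (1 + t) / 2 + a * ((1 + t) * log (1 + t) - (t + t ^ 2 / 2))| := by rw [hexpand]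
    _ ≤ |log (1 + t)| / 2 + a * |(1 + t) * log (1 + t) - (t + t ^ 2 / 2)| := by
      refine (abs_add_le _ _).trans_eq ?_
      rw [abs_div, abs_two, abs_mul, abs_of_pos ha]
    _ ≤ 2 * |t| / 2 + a * (4 * |t| ^ 3) := by
      gcongr
      · exact abs_log_one_add_le ht
      · exact abs_one_add_mul_log_one_add_sub_le ht
    _ = a * |t| / a + 4 * (a * |t|) ^ 3 / a ^ 2 := by field_simp

lemma abs_log_factorial_sub_expansion_le {m : ℕ} {a d : ℝ} (ha : 0 < a) (hd : |d| ≤ a / 2)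
    (hm : (m : ℝ) = a + d) :
    |log (m ! : ℝ) - (stirlingLog a + d * log a + d ^ 2 / (2 * a))| ≤
      (1 + |d|) / a + 4 * |d| ^ 3 / a ^ 2 := by
  have hma : a / 2 ≤ m := by linarith [neg_le_of_abs_le hd]
  have hm0 : m ≠ 0 := by
    rintro rfl
    rw [Nat.cast_zero] at hma
    linarith
  have hstirling : |log (m ! : ℝ) - stirlingLog m| ≤ 1 / a :=
    (abs_log_factorial_sub_stirlingLog_le hm0).trans (one_div_le_one_div_of_le ha (by linarith))
  have htaylor := abs_stirlingLog_add_sub_le ha hd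
  rw [← hm] at htaylor
  rw [add_div]
  linarith [abs_sub_le (log (m ! : ℝ)) (stirlingLog m)
    (stirlingLog a + d * log a + d ^ 2 / (2 * a))]

end Stirling

section Binomial

/-- The probability that a binomial variable with parameters `K` and `p` takes the value `n`.
It is a plain real function, where `ProbabilityTheory.binomial` is a measure, because only the
sizes of point masses matter here. -/
noncomputable def binomialMass (p : ℝ) (K n : ℕ) : ℝ := K.choose n * p ^ n * (1 - p) ^ (K - n)

/-- The density at `n` of the normal law with the mean `p K` and the variance `p (1 - p) K` of the
binomial law with parameters `K` and `p`. -/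
noncomputable def binomialGaussian (p : ℝ) (K n : ℕ) : ℝ :=
  gaussianPDFReal (p * K) (p * (1 - p) * K).toNNReal n

variable {p : ℝ}

lemma binomialMass_pos (hp0 : 0 < p) (hp1 : p < 1) {K n : ℕ} (hn : n ≤ K) :
    0 < binomialMass p K n := by
  have : 0 < K.choose n := Nat.choose_pos hn
  have : 0 < 1 - p := sub_pos.2 hp1
  unfold binomialMass
  positivity

lemma log_binomialMass (hp0 : 0 < p) (hp1 : p < 1) {K n : ℕ} (hn : n ≤ K) :
    log (binomialMass p K n) = log (K ! : ℝ) - log (n ! : ℝ) - log ((K - n)! : ℝ) +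
      n * log p + (K - n) * log (1 - p) := by
  have : 1 - p ≠ 0 := (sub_pos.2 hp1).ne'
  rw [binomialMass, Nat.cast_choose ℝ hn, log_mul (by positivity) (by positivity),
    log_mul (by positivity) (by positivity), log_div (by positivity) (by positivity),
    log_mul (by positivity) (by positivity), log_pow, log_pow, Nat.cast_sub hn]
  ring

lemma binomialGaussian_eq (hp0 : 0 ≤ p) (hp1 : p ≤ 1) (K n : ℕ) :
    binomialGaussian p K n = (√(2 * π * (p * (1 - p) * K)))⁻¹ *
      exp (-(n - p * K) ^ 2 / (2 * (p * (1 - p) * K))) := by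
  have : 0 ≤ 1 - p := sub_nonneg.2 hp1
  rw [binomialGaussian, gaussianPDFReal, coe_toNNReal _ (by positivity)]

lemma binomialGaussian_eq_of_mul_eq (hp0 : 0 ≤ p) (hp1 : p ≤ 1) {K : ℕ} (n : ℕ) {m : ℝ}
    (hm : p * K = m) :
    binomialGaussian p K n = (√(2 * π * (1 - p) * m))⁻¹ *
      exp (-(n - m) ^ 2 / (2 * (1 - p) * m)) := by
  subst hm
  rw [binomialGaussian_eq hp0 hp1]
  congr 3 <;> ring

lemma binomialGaussian_pos (hp0 : 0 < p) (hp1 : p < 1) {K : ℕ} (hK : 0 < K) (n : ℕ) :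
    0 < binomialGaussian p K n := by
  have : 0 < 1 - p := sub_pos.2 hp1
  exact gaussianPDFReal_pos _ _ _ (toNNReal_pos.2 (by positivity)).ne'

lemma log_binomialGaussian (hp0 : 0 < p) (hp1 : p < 1) {K : ℕ} (hK : 0 < K) (n : ℕ) :
    log (binomialGaussian p K n) = -log (2 * π * (p * (1 - p) * K)) / 2 -
      (n - p * K) ^ 2 / (2 * (p * (1 - p) * K)) := by
  have : 0 < 1 - p := sub_pos.2 hp1
  rw [binomialGaussian_eq hp0.le hp1.le, log_mul (by positivity) (exp_ne_zero _), log_exp,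
    log_inv, log_sqrt (by positivity)]
  ring

/-- Subtracting the expansions of `n!` and `(K - n)!` around their means from that of `K!`, only
the logarithm of the normal density survives. -/
lemma stirlingLog_sub_sub_eq_log_binomialGaussian (hp0 : 0 < p) (hp1 : p < 1) {K : ℕ}
    (hK : 0 < K) (n : ℕ) {d : ℝ} (hd : d = n - p * K) :
    stirlingLog K - (stirlingLog (p * K) + d * log (p * K) + d ^ 2 / (2 * (p * K))) -
      (stirlingLog ((1 - p) * K) + -d * log ((1 - p) * K) + (-d) ^ 2 / (2 * ((1 - p) * K))) +
      n * log p + (K - n) * log (1 - p) = log (binomialGaussian p K n) := by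
  have hp1' : 0 < 1 - p := sub_pos.2 hp1
  have hK' : (0 : ℝ) < K := Nat.cast_pos.2 hK
  have hvar : d ^ 2 / (2 * (p * (1 - p) * K)) =
      d ^ 2 / (2 * (p * K)) + (-d) ^ 2 / (2 * ((1 - p) * K)) := by
    field_simp
    ring
  have hlog2π : (2 * π : ℝ) ≠ 0 := by positivity
  rw [log_binomialGaussian hp0 hp1 hK, ← hd, hvar, stirlingLog, stirlingLog, stirlingLog,
    log_mul hlog2π hK'.ne', log_mul hlog2π (by positivity), log_mul hlog2π (by positivity),
    log_mul hlog2π (by positivity), log_mul (mul_pos hp0 hp1').ne' hK'.ne',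
    log_mul hp0.ne' hp1'.ne', log_mul hp0.ne' hK'.ne', log_mul hp1'.ne' hK'.ne']
  linear_combination (log (1 - p) - log p) * hd

lemma div_mul_add_div_one_sub_mul (hp0 : 0 < p) (hp1 : p < 1) (x k : ℝ) :
    x / (p * k) + x / ((1 - p) * k) = x / (p * (1 - p) * k) := by
  have : 0 < 1 - p := sub_pos.2 hp1
  field_simp
  ring

lemma div_mul_sq_add_div_one_sub_mul_sq_le (hp0 : 0 < p) (hp1 : p < 1) {x : ℝ} (hx : 0 ≤ x)
    (k : ℝ) :
    x / (p * k) ^ 2 + x / ((1 - p) * k) ^ 2 ≤ x / (p * (1 - p) * k) ^ 2 := by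
  have : 0 < 1 - p := sub_pos.2 hp1
  calc x / (p * k) ^ 2 + x / ((1 - p) * k) ^ 2
      = x / (p * (1 - p) * k) ^ 2 * (p ^ 2 + (1 - p) ^ 2) := by
        field_simp
        ring
    _ ≤ x / (p * (1 - p) * k) ^ 2 := mul_le_of_le_one_right (by positivity) (by nlinarith)

theorem abs_log_binomialMass_sub_log_binomialGaussian_le (hp0 : 0 < p) (hp1 : p < 1) {K n : ℕ}
    (hK : 0 < K) (hn : n ≤ K) {d v : ℝ} (hd : d = n - p * K) (hv : v = p * (1 - p) * K)
    (hdv : |d| ≤ v / 2) :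
    |log (binomialMass p K n) - log (binomialGaussian p K n)| ≤
      2 * (1 + |d|) / v + 4 * |d| ^ 3 / v ^ 2 := by
  have : 0 < 1 - p := sub_pos.2 hp1
  have : (0 : ℝ) < K := Nat.cast_pos.2 hK
  have hva : v ≤ p * K := by rw [hv]; gcongr; nlinarith
  have hvb : v ≤ (1 - p) * K := by rw [hv]; gcongr; nlinarith
  have hvpos : 0 < v := by rw [hv]; positivity
  have hfacK : |log (K ! : ℝ) - stirlingLog K| ≤ (1 + |d|) / v :=
    (abs_log_factorial_sub_stirlingLog_le hK.ne').trans <|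
      div_le_div₀ (by positivity) (by linarith [abs_nonneg d]) hvpos (by nlinarith)
  have hfacn := abs_log_factorial_sub_expansion_le (m := n) (a := p * K) (d := d) (by positivity)
    (by linarith) (by rw [hd]; ring)
  have hfacKn := abs_log_factorial_sub_expansion_le (m := K - n) (a := (1 - p) * K) (d := -d)
    (by positivity) (by rw [abs_neg]; linarith) (by rw [Nat.cast_sub hn, hd]; ring)
  rw [abs_neg] at hfacKn
  have hlinear := div_mul_add_div_one_sub_mul hp0 hp1 (1 + |d|) K
  have hcubic := div_mul_sq_add_div_one_sub_mul_sq_le hp0 hp1 (x := 4 * |d| ^ 3) (by positivity) K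
  rw [← hv] at hlinear hcubic
  have hdiv : 2 * (1 + |d|) / v = (1 + |d|) / v + (1 + |d|) / v := by ring
  rw [← stirlingLog_sub_sub_eq_log_binomialGaussian hp0 hp1 hK n hd, log_binomialMass hp0 hp1 hn]
  rw [abs_le] at hfacK hfacn hfacKn ⊢
  constructor <;> linarith

end Binomial

section CentralRegion

variable {A ε : ℝ}

lemma eventually_const_mul_rpow_neg_le_one (C : ℝ) {s : ℝ} (hs : 0 < s) :
    ∀ᶠ x : ℝ in atTop, C * x ^ (-s) ≤ 1 :=
  ((tendsto_rpow_neg_atTop hs).const_mul C).eventually_le_const (by rw [mul_zero]; exact one_pos)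

lemma eventually_const_mul_rpow_le_const_mul (A : ℝ) {c s : ℝ} (hc : 0 < c) (hs : s < 1) :
    ∀ᶠ x : ℝ in atTop, A * x ^ s ≤ c * x := by
  filter_upwards [eventually_const_mul_rpow_neg_le_one (A / c) (sub_pos.2 hs),
    eventually_gt_atTop 0] with x hsmall hx
  rwa [neg_sub, rpow_sub_one hx.ne', div_mul_div_comm, div_le_one (by positivity)] at hsmall

lemma central_region_error_le {c x d : ℝ} (hA : 0 ≤ A) (hc : 0 < c) (hε : ε ≤ 1 / 6) (hx : 1 ≤ x)
    (hd : |d| ≤ A * x ^ ((2 : ℝ) / 3 - ε)) :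
    2 * (1 + |d|) / (c * x) + 4 * |d| ^ 3 / (c * x) ^ 2 ≤
      (2 * (1 + A) / c + 4 * A ^ 3 / c ^ 2) * x ^ (-(3 * ε)) := by
  have hx0 : 0 < x := one_pos.trans_le hx
  have hcube : (x ^ ((2 : ℝ) / 3 - ε)) ^ 3 = x ^ 2 * x ^ (-(3 * ε)) := by
    rw [← rpow_mul_natCast hx0.le, ← rpow_natCast x 2, ← rpow_add hx0]
    congr 1
    push_cast
    ring
  have hone : 1 ≤ x * x ^ (-(3 * ε)) := by
    rw [← rpow_one_add' hx0.le (by linarith)]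
    exact one_le_rpow hx (by linarith)
  have hlinear : |d| ≤ A * (x * x ^ (-(3 * ε))) := by
    rw [← rpow_one_add' hx0.le (by linarith)]
    refine hd.trans ?_
    gcongr 2
    linarith
  calc 2 * (1 + |d|) / (c * x) + 4 * |d| ^ 3 / (c * x) ^ 2
      ≤ 2 * (x * x ^ (-(3 * ε)) + A * (x * x ^ (-(3 * ε)))) / (c * x) +
        4 * (A * x ^ ((2 : ℝ) / 3 - ε)) ^ 3 / (c * x) ^ 2 := by gcongr
    _ = (2 * (1 + A) / c + 4 * A ^ 3 / c ^ 2) * x ^ (-(3 * ε)) := by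
      rw [mul_pow A, hcube]
      field_simp

theorem exists_abs_log_binomialMass_sub_log_binomialGaussian_le {p c : ℝ} (hp0 : 0 < p)
    (hp1 : p < 1) (hc : 0 < c) (hA : 0 ≤ A) (hε0 : 0 < ε) (hε : ε ≤ 1 / 6) :
    ∃ C > 0, ∀ᶠ N : ℕ in atTop, ∀ K n : ℕ, p * K = c * N → n ≤ K →
      |n - p * K| ≤ A * (N : ℝ) ^ ((2 : ℝ) / 3 - ε) →
      |log (binomialMass p K n) - log (binomialGaussian p K n)| ≤ C * (N : ℝ) ^ (-(3 * ε)) := by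
  have hc' : 0 < (1 - p) * c := mul_pos (sub_pos.2 hp1) hc
  refine ⟨2 * (1 + A) / ((1 - p) * c) + 4 * A ^ 3 / ((1 - p) * c) ^ 2, by positivity, ?_⟩
  have hcentral := eventually_const_mul_rpow_le_const_mul A (half_pos hc')
    (by linarith : (2 : ℝ) / 3 - ε < 1)
  filter_upwards [tendsto_natCast_atTop_atTop.eventually hcentral, eventually_ge_atTop 1]
    with N hcentral hN K n hK hn hd
  have hpK : 0 < p * K := by rw [hK]; positivity
  have hK0 : 0 < K := Nat.cast_pos.1 (pos_of_mul_pos_right hpK hp0.le)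
  have hv : (1 - p) * c * N = p * (1 - p) * K := by linear_combination (p - 1) * hK
  exact (abs_log_binomialMass_sub_log_binomialGaussian_le hp0 hp1 hK0 hn rfl hv
    (by linarith)).trans (central_region_error_le hA hc' hε (mod_cast hN) hd)

end CentralRegion

section Proportions

lemma sum_eq_of_forall_eq_mul {ι : Type*} {s : Finset ι} {q : ι → ℚ} {K : ι → ℕ} {M : ℕ}
    (hq : ∑ i ∈ s, q i = 1) (hK : ∀ i ∈ s, (K i : ℚ) = q i * M) : ∑ i ∈ s, K i = M := by
  have hcast : ∑ i ∈ s, (K i : ℚ) = M := by rw [sum_congr rfl hK, ← sum_mul, hq, one_mul]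
  exact_mod_cast hcast

lemma abs_log_prod_div_sub_log_prod_div_le {ι : Type*} {s : Finset ι} {f g δ : ι → ℝ}
    {x y η : ℝ} (hf : ∀ i ∈ s, 0 < f i) (hg : ∀ i ∈ s, 0 < g i) (hx : 0 < x) (hy : 0 < y)
    (hfg : ∀ i ∈ s, |log (f i) - log (g i)| ≤ δ i) (hxy : |log x - log y| ≤ η) :
    |log ((∏ i ∈ s, f i) / x) - log ((∏ i ∈ s, g i) / y)| ≤ ∑ i ∈ s, δ i + η := by
  have hsplit : log ((∏ i ∈ s, f i) / x) - log ((∏ i ∈ s, g i) / y) =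
      ∑ i ∈ s, (log (f i) - log (g i)) - (log x - log y) := by
    rw [log_div (prod_pos hf).ne' hx.ne', log_div (prod_pos hg).ne' hy.ne',
      log_prod fun i hi ↦ (hf i hi).ne', log_prod fun i hi ↦ (hg i hi).ne', sum_sub_distrib]
    ring
  rw [hsplit]
  exact (abs_sub _ _).trans
    (add_le_add ((abs_sum_le_sum_abs _ _).trans (sum_le_sum hfg)) hxy)

lemma abs_sub_le_of_abs_log_sub_log_le {x y δ : ℝ} (hx : 0 < x) (hy : 0 < y)
    (hδ : δ ≤ 1) (h : |log x - log y| ≤ δ) : |x - y| ≤ 2 * δ * y := by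
  have hxy : x - y = (exp (log x - log y) - 1) * y := by
    rw [exp_sub, exp_log hx, exp_log hy]
    field_simp
  rw [hxy, abs_mul, abs_of_pos hy]
  gcongr
  exact (abs_exp_sub_one_le (h.trans hδ)).trans (by gcongr)

end Proportions

section Fermions

variable {r : ℕ}

/-- The powers of `p` and `1 - p` cancel, so `p` is free. -/
theorem PF_sum_eq_prod_binomialMass_div {p : ℝ} (hp0 : 0 < p) (hp1 : p < 1) {n K : Fin r → ℕ}
    (hn : ∀ i, n i ≤ K i) :
    PF (∑ i, K i) n K =
      (∏ i, binomialMass p (K i) (n i)) / binomialMass p (∑ i, K i) (∑ i, n i) := by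
  have hp1' : 1 - p ≠ 0 := (sub_pos.2 hp1).ne'
  have hsum : ∑ i, n i ≤ ∑ i, K i := sum_le_sum fun i _ ↦ hn i
  have hsub : ∑ i, (K i - n i) = ∑ i, K i - ∑ i, n i := sum_tsub_distrib _ fun i _ ↦ hn i
  simp only [PF, binomialMass, prod_mul_distrib, prod_pow_eq_pow_sum, hsub, Nat.cast_choose ℝ hsum,
    Nat.cast_choose ℝ (hn _), prod_div_distrib]
  field_simp

variable {q : Fin r → ℚ} {α : ℚ} {N M : ℕ} {n K : Fin r → ℕ}

lemma GaussF_eq_prod_binomialGaussian_div (hq0 : ∀ i, 0 < q i) (hα0 : 0 < α) (hα1 : α < 1)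
    (hN : 0 < N) (hM : (α : ℝ) * M = N) (hK : ∀ i, (α : ℝ) * K i = q i * N) :
    GaussF N n q α = (∏ i, binomialGaussian α (K i) (n i)) / binomialGaussian α M N := by
  have hα0' : (0 : ℝ) ≤ α := mod_cast hα0.le
  have hα1' : (0 : ℝ) < 1 - α := sub_pos.2 (mod_cast hα1)
  have : (0 : ℝ) < N := Nat.cast_pos.2 hN
  set x : ℝ := 2 * π * (1 - α) * N with hx
  have hx0 : 0 < x := by positivity
  have htotal : binomialGaussian α M N = (√x)⁻¹ := by
    rw [binomialGaussian_eq_of_mul_eq hα0' (sub_nonneg.1 hα1'.le) N hM, ← hx]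
    simp
  have hfactor : ∀ i, binomialGaussian α (K i) (n i) = (√x * √(q i))⁻¹ *
      exp (-N * ((n i / N - q i) ^ 2 / (2 * (1 - α) * q i))) := fun i ↦ by
    have hqi : (0 : ℝ) < q i := Rat.cast_pos.2 (hq0 i)
    rw [binomialGaussian_eq_of_mul_eq hα0' (sub_nonneg.1 hα1'.le) (n i) (hK i),
      ← sqrt_mul hx0.le]
    congr 3
    · ring
    · field_simp
  have hpow : x ^ (((r : ℝ) - 1) / 2) = √x ^ r / √x := by
    rw [rpow_div_two_eq_sqrt _ hx0.le, rpow_sub_one (sqrt_pos.2 hx0).ne', rpow_natCast]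
  simp only [GaussF, htotal, hfactor, ← hx, hpow, prod_mul_distrib, prod_inv_distrib, prod_const,
    card_univ, Fintype.card_fin, ← exp_sum, ← mul_sum]
  generalize exp _ = e
  field_simp

lemma abs_PF_sub_GaussF_le (hq0 : ∀ i, 0 < q i) (hα0 : 0 < α) (hα1 : α < 1) (hN : 0 < N)
    (hM : (α : ℝ) * M = N) (hK : ∀ i, (α : ℝ) * K i = q i * N) (hKsum : ∑ i, K i = M)
    (hnsum : ∑ i, n i = N) (hn : ∀ i, n i ≤ K i) {δ : Fin r → ℝ} {η : ℝ}
    (hδ : ∀ i, |log (binomialMass α (K i) (n i)) - log (binomialGaussian α (K i) (n i))| ≤ δ i)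
    (hη : |log (binomialMass α M N) - log (binomialGaussian α M N)| ≤ η)
    (hsmall : ∑ i, δ i + η ≤ 1) :
    |PF M n K - GaussF N n q α| ≤ 2 * (∑ i, δ i + η) * GaussF N n q α := by
  have hα0' : (0 : ℝ) < α := Rat.cast_pos.2 hα0
  have hα1' : (α : ℝ) < 1 := mod_cast hα1
  have hN' : (0 : ℝ) < N := Nat.cast_pos.2 hN
  have hMpos : 0 < M := Nat.cast_pos.1 (pos_of_mul_pos_right (hN'.trans_eq hM.symm) hα0'.le)
  have hKpos : ∀ i, 0 < K i := fun i ↦ Nat.cast_pos.1 (pos_of_mul_pos_right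
    ((mul_pos (Rat.cast_pos.2 (hq0 i)) hN').trans_eq (hK i).symm) hα0'.le)
  have hNM : N ≤ M := hnsum ▸ hKsum ▸ sum_le_sum fun i _ ↦ hn i
  have hPF := PF_sum_eq_prod_binomialMass_div hα0' hα1' hn
  rw [hKsum, hnsum] at hPF
  have hmass := fun i ↦ binomialMass_pos hα0' hα1' (hn i)
  have hgauss := fun i ↦ binomialGaussian_pos hα0' hα1' (hKpos i) (n i)
  have hmass' := binomialMass_pos hα0' hα1' hNM
  have hgauss' := binomialGaussian_pos hα0' hα1' hMpos N
  rw [hPF, GaussF_eq_prod_binomialGaussian_div hq0 hα0 hα1 hN hM hK]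
  exact abs_sub_le_of_abs_log_sub_log_le (div_pos (prod_pos fun i _ ↦ hmass i) hmass')
    (div_pos (prod_pos fun i _ ↦ hgauss i) hgauss') hsmall
    (abs_log_prod_div_sub_log_prod_div_le (fun i _ ↦ hmass i) (fun i _ ↦ hgauss i) hmass' hgauss'
      (fun i _ ↦ hδ i) hη)

end Fermions

/-- Quantum de Moivre–Laplace theorem for fermions: at fixed density `α = N/M < 1`,
for counts in the central region `|nᵢ - N qᵢ| ≤ A N^(2/3-ε)`, the average fermionic
counting probability is the Gaussian up to a relative error `O(N^(-3ε))`. -/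
theorem deMoivreLaplace_fermions
    (r : ℕ) (hr : 2 ≤ r) (q : Fin r → ℚ)
    (hq0 : ∀ i, 0 < q i) (hq1 : ∀ i, q i < 1) (hqsum : ∑ i, q i = 1)
    (α : ℚ) (hα0 : 0 < α) (hα1 : α < 1)
    (A ε : ℝ) (hA : 0 < A) (hε0 : 0 < ε) (hε1 : ε < 1 / 6) :
    ∃ C > 0, ∃ N₀ : ℕ, ∀ N : ℕ, N₀ ≤ N → ∀ M : ℕ, α * M = N →
      ∀ K : Fin r → ℕ, (∀ i, (K i : ℚ) = q i * M) →
      ∀ n : Fin r → ℕ, ∑ i, n i = N → (∀ i, n i ≤ K i) →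
      (∀ i, |(n i : ℝ) - (N : ℝ) * (q i : ℝ)| ≤ A * (N : ℝ) ^ ((2 : ℝ) / 3 - ε)) →
      |PF M n K - GaussF N n q α| ≤ C * (N : ℝ) ^ (-(3 * ε)) * GaussF N n q α := by
  have hα0' : (0 : ℝ) < α := Rat.cast_pos.2 hα0
  have hα1' : (α : ℝ) < 1 := mod_cast hα1
  choose C hC hfactor using fun i ↦ exists_abs_log_binomialMass_sub_log_binomialGaussian_le
    hα0' hα1' (Rat.cast_pos.2 (hq0 i)) hA.le hε0 hε1.le
  obtain ⟨C₀, hC₀, htotal⟩ := exists_abs_log_binomialMass_sub_log_binomialGaussian_le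
    hα0' hα1' one_pos hA.le hε0 hε1.le
  have hCsum : 0 ≤ ∑ i, C i := sum_nonneg fun i _ ↦ (hC i).le
  have hsmall := tendsto_natCast_atTop_atTop.eventually
    (eventually_const_mul_rpow_neg_le_one (∑ i, C i + C₀) (mul_pos three_pos hε0))
  obtain ⟨N₀, hN₀⟩ := eventually_atTop.1
    ((eventually_all.2 hfactor).and (htotal.and (hsmall.and (eventually_gt_atTop 0))))
  refine ⟨2 * (∑ i, C i + C₀), by positivity, N₀, fun N hN M hM K hK n hnsum hnK hnd ↦ ?_⟩
  obtain ⟨hfactor, htotal, hsmall, hNpos⟩ := hN₀ N hN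
  have hKsum : ∑ i, K i = M := sum_eq_of_forall_eq_mul hqsum fun i _ ↦ hK i
  have hNM : N ≤ M := hnsum ▸ hKsum ▸ sum_le_sum fun i _ ↦ hnK i
  have hM' : (α : ℝ) * M = N := mod_cast hM
  have hK' : ∀ i, (α : ℝ) * K i = q i * N := fun i ↦ by
    exact_mod_cast (by rw [hK, ← hM]; ring : α * K i = q i * N)
  have hδ := fun i ↦ hfactor i (K i) (n i) (hK' i) (hnK i) (by rw [hK', mul_comm]; exact hnd i)
  have hη := htotal M N (by rw [hM', one_mul]) hNM (by rw [hM', sub_self, abs_zero]; positivity)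
  have herror : ∑ i, C i * (N : ℝ) ^ (-(3 * ε)) + C₀ * (N : ℝ) ^ (-(3 * ε)) =
      (∑ i, C i + C₀) * (N : ℝ) ^ (-(3 * ε)) := by rw [add_mul, sum_mul]
  have hbound := abs_PF_sub_GaussF_le hq0 hα0 hα1 hNpos hM' hK' hKsum hnsum hnK hδ hη
    (herror.trans_le hsmall)
  rwa [herror, ← mul_assoc] at hbound
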